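/- There exists a constant C > 0 such that for all sufficiently large n there exists a truly n-variate Boolean function f : {0,1}^n → {0,1} with pdeg(f) ≤ C·√(log₂ n). -/

import Mathlib

open scoped Classical

noncomputable def evalBool {ι : Type} (a : ι → Bool) (P : MvPolynomial ι ℝ) : ℝ :=
  MvPolynomial.eval (fun i => if a i then (1:ℝ) else 0) P

def HasProbPoly {ι : Type} (f : (ι → Bool) → Bool) (ε : ℝ) (d : ℕ) : Prop :=
  ∃ (k : ℕ) (w : Fin k → ℝ) (P : Fin k → MvPolynomial ι ℝ),
    (∀ i, 0 ≤ w i) ∧ (∑ i, w i = 1) ∧ (∀ i, (P i).totalDegree ≤ d) ∧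
    ∀ a : ι → Bool,
      ∑ i ∈ Finset.univ.filter
          (fun i => evalBool a (P i) ≠ (if f a then (1:ℝ) else 0)), w i ≤ ε

noncomputable def pdeg {ι : Type} (ε : ℝ) (f : (ι → Bool) → Bool) : ℕ :=
  sInf {d | HasProbPoly f ε d}

def TrulyVariate {ι : Type} (f : (ι → Bool) → Bool) : Prop :=
  ∀ i : ι, ∃ a, f (Function.update a i (!(a i))) ≠ f a

def ORf (n : ℕ) : (Fin n → Bool) → Bool := fun a => decide (∃ i, a i = true)

noncomputable def sensitivity {n : ℕ} (f : (Fin n → Bool) → Bool) : ℕ :=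
  Finset.univ.sup (fun a : Fin n → Bool =>
    (Finset.univ.filter (fun i : Fin n => f (Function.update a i (!(a i))) ≠ f a)).card)

/-- One-sided randomized test: always `1` on inputs satisfying `V`, nonzero with
probability at most `e a` on input `a`. -/
def Tst {ι : Type} (V : (ι → Bool) → Prop) (D : ℕ) (e : (ι → Bool) → ℝ) : Prop :=
  ∃ (Ω : Type) (_ : Fintype Ω) (w : Ω → ℝ) (Q : Ω → MvPolynomial ι ℝ),
    (∀ i, 0 ≤ w i) ∧ (∑ i, w i = 1) ∧ (∀ i, (Q i).totalDegree ≤ D) ∧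
    (∀ a, V a → ∀ i, evalBool a (Q i) = 1) ∧
    (∀ a, ∑ i, w i * (if evalBool a (Q i) = 0 then 0 else 1) = e a)

lemma evalBool_mul {ι : Type} (a : ι → Bool) (P Q : MvPolynomial ι ℝ) :
    evalBool a (P * Q) = evalBool a P * evalBool a Q := by
  simp [evalBool]

lemma Tst.one {ι : Type} (V : (ι → Bool) → Prop) : Tst V 0 (fun _ => 1) := by
  refine ⟨Unit, inferInstance, fun _ => 1, fun _ => 1, ?_, ?_, ?_, ?_, ?_⟩ <;>
    simp [evalBool]

lemma Tst.mul {ι : Type} {V : (ι → Bool) → Prop} {D E : ℕ} {e g : (ι → Bool) → ℝ}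
    (h1 : Tst V D e) (h2 : Tst V E g) : Tst V (D + E) (fun a => e a * g a) := by
  obtain ⟨Ω, _, w, Q, h0, hs, hd, hV, he⟩ := h1
  obtain ⟨Ω', _, w', Q', h0', hs', hd', hV', he'⟩ := h2
  refine ⟨Ω × Ω', inferInstance, fun x => w x.1 * w' x.2, fun x => Q x.1 * Q' x.2,
    ?_, ?_, ?_, ?_, ?_⟩
  · exact fun x => mul_nonneg (h0 _) (h0' _)
  · rw [Fintype.sum_prod_type, ← Finset.sum_mul_sum, hs, hs', one_mul]
  · exact fun x => (MvPolynomial.totalDegree_mul _ _).trans (add_le_add (hd _) (hd' _))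
  · intro a ha x
    rw [evalBool_mul, hV a ha, hV' a ha, one_mul]
  · intro a
    beta_reduce
    rw [← he a, ← he' a, Finset.sum_mul_sum, Fintype.sum_prod_type]
    refine Finset.sum_congr rfl fun x _ => Finset.sum_congr rfl fun y _ => ?_
    simp only [evalBool_mul, mul_eq_zero]
    by_cases h : evalBool a (Q x) = 0 <;> by_cases h' : evalBool a (Q' y) = 0 <;> simp [h, h']

lemma Tst.prod {ι : Type} {V : (ι → Bool) → Prop} {D : ℕ} {e : ℕ → (ι → Bool) → ℝ}
    (h : ∀ j, Tst V D (e j)) (n : ℕ) :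
    Tst V (n * D) (fun a => ∏ j ∈ Finset.range n, e j a) := by
  induction n with
  | zero => simpa using Tst.one V
  | succ n ih =>
    have := ih.mul (h n)
    simp only [Finset.prod_range_succ]
    rwa [Nat.succ_mul]

/-- The isolation probability of a random set of density `p`. -/
lemma isolate {U : Type} [Fintype U] (S : Finset U) (p : ℝ) (hp0 : 0 ≤ p) (hp1 : p ≤ 1) :
    S.card * (p * (1 - p) ^ (S.card - 1)) ≤
      ∑ R : Finset U, (p ^ R.card * (1 - p) ^ (Rᶜ).card) * (if (R ∩ S).card = 1 then 1 else 0) := by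
  have key : ∀ u ∈ S, ∑ R : Finset U, (p ^ R.card * (1 - p) ^ (Rᶜ).card) *
      (if R ∩ S = {u} then 1 else 0) = p * (1 - p) ^ (S.card - 1) := by
    intro u hu
    have h := Finset.prod_add (fun i => if i ∈ S then (if i = u then p else 0) else p)
      (fun i => if i = u then 0 else 1 - p) (Finset.univ : Finset U)
    rw [Finset.powerset_univ] at h
    have hl : ∏ i : U, ((if i ∈ S then (if i = u then p else 0) else p) +
        (if i = u then 0 else 1 - p)) = p * (1 - p) ^ (S.card - 1) := by
      have : ∀ i : U, ((if i ∈ S then (if i = u then p else 0) else p) +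
        (if i = u then 0 else 1 - p)) = (if i ∈ S then (if i = u then p else 1 - p) else 1) := by
        intro i
        by_cases h1 : i ∈ S <;> by_cases h2 : i = u <;> simp [h1, h2]
        · intro h3; exact absurd hu h3
        · intro h3; exact absurd hu h3
      rw [Finset.prod_congr rfl (fun i _ => this i), Finset.prod_ite_mem, Finset.univ_inter,
        ← Finset.mul_prod_erase S _ hu]
      simp only [if_true]
      congr 1
      rw [← Finset.card_erase_of_mem hu, ← Finset.prod_const]
      refine Finset.prod_congr rfl fun i hi => ?_
      rw [if_neg (Finset.ne_of_mem_erase hi)]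
    rw [← hl, h]
    refine Finset.sum_congr rfl fun R _ => ?_
    by_cases hR : R ∩ S = {u}
    · rw [if_pos hR, mul_one, ← Finset.prod_const, ← Finset.prod_const]
      have huR : u ∈ R := by
        have : u ∈ R ∩ S := by rw [hR]; simp
        exact (Finset.mem_inter.1 this).1
      congr 1
      · refine Finset.prod_congr rfl fun i hi => ?_
        by_cases hS : i ∈ S
        · have : i ∈ R ∩ S := Finset.mem_inter.2 ⟨hi, hS⟩
          rw [hR, Finset.mem_singleton] at this
          simp [this]
        · simp [hS]
      · rw [← Finset.compl_eq_univ_sdiff]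
        refine Finset.prod_congr rfl fun i hi => ?_
        rw [if_neg]
        rintro rfl
        exact (Finset.mem_compl.1 hi) huR
    · rw [if_neg hR, mul_zero]
      symm
      by_cases huR : u ∈ R
      · have : ∃ v ∈ R ∩ S, v ≠ u := by
          by_contra hc
          push Not at hc
          apply hR
          ext v
          rw [Finset.mem_singleton]
          refine ⟨hc v, ?_⟩
          rintro rfl
          exact Finset.mem_inter.2 ⟨huR, hu⟩
        obtain ⟨v, hv, hvu⟩ := this
        rw [Finset.mem_inter] at hv
        apply mul_eq_zero_of_left
        exact Finset.prod_eq_zero hv.1 (by simp [hv.2, hvu])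
      · apply mul_eq_zero_of_right
        exact Finset.prod_eq_zero (i := u) (by simp [huR]) (by simp)
  calc S.card * (p * (1 - p) ^ (S.card - 1))
      = ∑ u ∈ S, ∑ R : Finset U, (p ^ R.card * (1 - p) ^ (Rᶜ).card) *
        (if R ∩ S = {u} then 1 else 0) := by
        rw [Finset.sum_congr rfl key, Finset.sum_const, nsmul_eq_mul]
    _ = ∑ R : Finset U, (p ^ R.card * (1 - p) ^ (Rᶜ).card) *
          ∑ u ∈ S, (if R ∩ S = {u} then 1 else 0) := by
        rw [Finset.sum_comm]
        simp only [Finset.mul_sum]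
    _ ≤ _ := by
        refine Finset.sum_le_sum fun R _ => ?_
        have : 0 ≤ 1 - p := by linarith
        refine mul_le_mul_of_nonneg_left ?_ (by positivity)
        by_cases hc : (R ∩ S).card = 1
        · obtain ⟨v, hv⟩ := Finset.card_eq_one.1 hc
          rw [if_pos hc, hv]
          simp only [Finset.singleton_inj]
          rw [Finset.sum_ite_eq]
          split_ifs <;> norm_num
        · rw [if_neg hc]
          refine (Finset.sum_eq_zero fun u _ => ?_).le
          rw [if_neg]
          intro h
          exact hc (by rw [h]; simp)

lemma level {ι U : Type} [Fintype U] (M : U → MvPolynomial ι ℝ) (D : ℕ)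
    (hD : ∀ u, (M u).totalDegree ≤ D) (z : (ι → Bool) → U → Prop)
    (hz : ∀ a u, evalBool a (M u) = if z a u then 1 else 0) (p : ℝ) (hp0 : 0 ≤ p) (hp1 : p ≤ 1) :
    ∃ e : (ι → Bool) → ℝ, Tst (fun a => ∀ u, ¬ z a u) D e ∧ (∀ a, 0 ≤ e a) ∧ (∀ a, e a ≤ 1) ∧
      ∀ a, e a ≤ 1 - (Finset.univ.filter (z a)).card *
        (p * (1 - p) ^ ((Finset.univ.filter (z a)).card - 1)) := by
  have hq : 0 ≤ 1 - p := by linarith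
  have hw : ∀ R : Finset U, 0 ≤ p ^ R.card * (1 - p) ^ (Rᶜ).card := fun R => by positivity
  have hs : ∑ R : Finset U, p ^ R.card * (1 - p) ^ (Rᶜ).card = 1 := by
    have h := Finset.prod_add (fun _ => p) (fun _ => 1 - p) (Finset.univ : Finset U)
    rw [Finset.powerset_univ] at h
    simp only [Finset.prod_const, ← Finset.compl_eq_univ_sdiff] at h
    rw [← h]; simp
  have hev : ∀ a (R : Finset U), evalBool a (1 - ∑ u ∈ R, M u) =
      1 - ((R ∩ Finset.univ.filter (z a)).card : ℝ) := by
    intro a R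
    have : evalBool a (1 - ∑ u ∈ R, M u) = 1 - ∑ u ∈ R, evalBool a (M u) := by
      simp [evalBool]
    rw [this]
    simp only [hz]
    rw [Finset.sum_boole]
    congr 3
    ext u; simp
  refine ⟨fun a => ∑ R : Finset U, (p ^ R.card * (1 - p) ^ (Rᶜ).card) *
    (if evalBool a (1 - ∑ u ∈ R, M u) = 0 then 0 else 1), ⟨Finset U, inferInstance, _,
      fun R => 1 - ∑ u ∈ R, M u, hw, hs, ?_, ?_, fun a => rfl⟩, ?_, ?_, ?_⟩
  · intro R
    refine (MvPolynomial.totalDegree_sub _ _).trans (max_le (by simp) ?_)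
    exact MvPolynomial.totalDegree_finsetSum_le fun u _ => hD u
  · intro a ha R
    rw [hev]
    have : Finset.univ.filter (z a) = ∅ := by
      ext u; simp [ha u]
    simp [this]
  · intro a
    refine Finset.sum_nonneg fun R _ => mul_nonneg (hw R) ?_
    split_ifs <;> norm_num
  · intro a
    refine le_trans ?_ hs.le
    refine Finset.sum_le_sum fun R _ => mul_le_of_le_one_right (hw R) ?_
    split_ifs <;> norm_num
  · intro a
    have := isolate (Finset.univ.filter (z a)) p hp0 hp1
    have h2 : ∑ R : Finset U, (p ^ R.card * (1 - p) ^ (Rᶜ).card) *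
      (if evalBool a (1 - ∑ u ∈ R, M u) = 0 then 0 else 1) = 1 -
      ∑ R : Finset U, (p ^ R.card * (1 - p) ^ (Rᶜ).card) *
        (if (R ∩ Finset.univ.filter (z a)).card = 1 then 1 else 0) := by
      refine Eq.trans ?_ (congrArg (fun x : ℝ => x - _) hs)
      beta_reduce
      rw [← Finset.sum_sub_distrib]
      refine Finset.sum_congr rfl fun R _ => ?_
      rw [hev]
      by_cases h : (R ∩ Finset.univ.filter (z a)).card = 1
      · rw [if_pos h, if_pos (by rw [h]; simp)]; ring
      · rw [if_neg h, if_neg]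
        · ring
        · intro h'
          apply h
          have : ((R ∩ Finset.univ.filter (z a)).card : ℝ) = 1 := by linarith
          exact_mod_cast this
    simp only at *
    rw [h2]
    linarith

lemma or_test {ι U : Type} [Fintype U] (M : U → MvPolynomial ι ℝ) (D L : ℕ)
    (hL : Fintype.card U ≤ 2 ^ L)
    (hD : ∀ u, (M u).totalDegree ≤ D) (z : (ι → Bool) → U → Prop)
    (hz : ∀ a u, evalBool a (M u) = if z a u then 1 else 0) :
    ∃ e : (ι → Bool) → ℝ, Tst (fun a => ∀ u, ¬ z a u) (6 * ((L + 1) * D)) e ∧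
      ∀ a, (∃ u, z a u) → e a ≤ 1 / 3 := by
  have hp : ∀ j : ℕ, (0:ℝ) ≤ 1 / 2 ^ (j + 2) ∧ (1:ℝ) / 2 ^ (j + 2) ≤ 1 := by
    intro j
    refine ⟨by positivity, ?_⟩
    rw [div_le_one (by positivity)]
    exact one_le_pow₀ (by norm_num)
  choose e he h0 h1 hb using fun j : ℕ => level M D hD z hz (1 / 2 ^ (j + 2)) (hp j).1 (hp j).2
  have hT := Tst.prod (fun _ : ℕ => Tst.prod he (L + 1)) 6
  refine ⟨_, hT, ?_⟩
  intro a ⟨u, hu⟩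
  simp only [Finset.prod_const, Finset.card_range]
  set w := (Finset.univ.filter (z a)).card with hw
  have hw0 : w ≠ 0 := by
    rw [hw, Finset.card_ne_zero]
    exact ⟨u, by simp [hu]⟩
  have hwU : w ≤ 2 ^ L := (Finset.card_le_univ _).trans hL
  have hj : Nat.log 2 w ≤ L := by
    calc Nat.log 2 w ≤ Nat.log 2 (2 ^ L) := Nat.log_mono_right hwU
      _ = L := Nat.log_pow (by norm_num) L
  set j := Nat.log 2 w with hjdef
  have hlow : (2:ℝ) ^ j ≤ w := by exact_mod_cast Nat.pow_log_le_self 2 hw0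
  have hhigh : (w:ℝ) ≤ 2 ^ (j + 1) := by
    exact_mod_cast (Nat.lt_pow_succ_log_self (by norm_num) w).le
  have hpos : (0:ℝ) < 2 ^ j := by positivity
  have hej : e j a ≤ 13 / 16 := by
    refine (hb j a).trans ?_
    rw [← hw]
    set p : ℝ := 1 / 2 ^ (j + 2) with hpdef
    have hp1 := (hp j).2
    have hp0 := (hp j).1
    have hbern : 1 + ((w - 1 : ℕ) : ℝ) * (-p) ≤ (1 + (-p)) ^ (w - 1) :=
      one_add_mul_le_pow (by linarith) _
    have hbern2 : 1 - w * p ≤ (1 - p) ^ (w - 1) := by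
      have : ((w - 1 : ℕ) : ℝ) ≤ w := by exact_mod_cast Nat.sub_le _ _
      have := mul_le_mul_of_nonneg_right this hp0
      have h3 : (1 + -p) = 1 - p := by ring
      rw [h3] at hbern
      linarith
    have hl : 1 / 4 ≤ w * p := by
      rw [hpdef, pow_add, mul_one_div, le_div_iff₀ (by positivity)]
      linarith
    have hh : w * p ≤ 1 / 2 := by
      rw [hpdef, pow_add, mul_one_div, div_le_iff₀ (by positivity)]
      rw [pow_succ] at hhigh
      linarith
    have h4 : w * p * (1 - w * p) ≤ w * p * (1 - p) ^ (w - 1) :=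
      mul_le_mul_of_nonneg_left hbern2 (by linarith)
    nlinarith
  have hprod : ∏ i ∈ Finset.range (L + 1), e i a ≤ 13 / 16 := by
    have hm : j ∈ Finset.range (L + 1) := by simp; omega
    rw [← Finset.mul_prod_erase _ _ hm]
    refine (mul_le_of_le_one_right (h0 j a) ?_).trans hej
    exact Finset.prod_le_one (fun i _ => h0 i a) (fun i _ => h1 i a)
  have hprod0 : 0 ≤ ∏ i ∈ Finset.range (L + 1), e i a := Finset.prod_nonneg fun i _ => h0 i a
  calc (∏ i ∈ Finset.range (L + 1), e i a) ^ 6 ≤ (13 / 16) ^ 6 := pow_le_pow_left₀ hprod0 hprod 6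
    _ ≤ 1 / 3 := by norm_num

lemma hasProbPoly_of_test {ι : Type} (f : (ι → Bool) → Bool) (V : (ι → Bool) → Prop)
    (S : MvPolynomial ι ℝ) (D E : ℕ) (e : (ι → Bool) → ℝ) (hS : S.totalDegree ≤ E)
    (hT : Tst V D e) (hV : ∀ a, V a → evalBool a S = if f a then 1 else 0)
    (hnV : ∀ a, ¬ V a → f a = false ∧ e a ≤ 1 / 3) : HasProbPoly f (1 / 3) (E + D) := by
  obtain ⟨Ω, _, w, Q, h0, hs, hd, h1, he⟩ := hT
  let q := (Fintype.equivFin Ω).symm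
  refine ⟨Fintype.card Ω, fun i => w (q i), fun i => S * Q (q i), fun i => h0 _, ?_, ?_, ?_⟩
  · rw [← hs]; exact Equiv.sum_comp q w
  · exact fun i => (MvPolynomial.totalDegree_mul _ _).trans (add_le_add hS (hd _))
  · intro a
    by_cases ha : V a
    · rw [Finset.filter_false_of_mem]
      · simp
      · intro i _
        rw [evalBool_mul, h1 a ha, mul_one, hV a ha, not_not]
    · obtain ⟨hf, hea⟩ := hnV a ha
      refine le_trans ?_ hea
      rw [← he a, ← Equiv.sum_comp q, Finset.sum_filter]
      refine Finset.sum_le_sum fun i _ => ?_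
      rw [evalBool_mul, hf]
      by_cases hq : evalBool a (Q (q i)) = 0
      · simp [hq]
      · simp only [hq, if_false, mul_one]
        split_ifs <;> first | exact le_rfl | exact h0 _

/-- The multi-block addressing function. -/
def addrF {d B t : ℕ} (φ : Fin t → (Fin d → Fin B)) :
    ((Fin d × Fin B) ⊕ Fin t → Bool) → Bool := fun a =>
  decide (∃ c : Fin d → Fin B, (∀ j i, a (Sum.inl (j, i)) = decide (i = c j)) ∧
    ∀ s, φ s = c → a (Sum.inr s) = true)

lemma addrF_of {d B t : ℕ} (φ : Fin t → (Fin d → Fin B)) (a : (Fin d × Fin B) ⊕ Fin t → Bool)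
    (c : Fin d → Fin B) (hc : ∀ j i, a (Sum.inl (j, i)) = decide (i = c j)) :
    addrF φ a = true ↔ ∀ s, φ s = c → a (Sum.inr s) = true := by
  unfold addrF
  rw [decide_eq_true_iff]
  constructor
  · rintro ⟨c', h1, h2⟩
    have : c' = c := by
      funext j
      have := h1 j (c' j)
      rw [hc] at this
      simpa using this
    rwa [← this]
  · exact fun h => ⟨c, hc, h⟩

lemma upd_self {α β : Type} (inst : DecidableEq α) {a : α → β} {i : α} {v : β} :
    @Function.update α (fun _ => β) inst a i v i = v := by
  simp

lemma upd_ne {α β : Type} (inst : DecidableEq α) {a : α → β} {i j : α} {v : β} (h : j ≠ i) :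
    @Function.update α (fun _ => β) inst a i v j = a j := by
  simp [h]

lemma addrF_truly {d B t : ℕ} (φ : Fin t → (Fin d → Fin B)) (hφ : Function.Injective φ) :
    TrulyVariate (addrF φ) := by
  rintro (⟨j, i⟩ | s)
  · let c : Fin d → Fin B := fun _ => i
    let a : (Fin d × Fin B) ⊕ Fin t → Bool :=
      Sum.elim (fun x => decide (x.2 = c x.1)) (fun _ => true)
    refine ⟨a, ?_⟩
    have h1 : addrF φ a = true := (addrF_of φ a c (fun _ _ => rfl)).2 (fun _ _ => rfl)
    rw [h1]
    intro h2
    unfold addrF at h2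
    rw [decide_eq_true_iff] at h2
    obtain ⟨c', hc', -⟩ := h2
    have h3 := hc' j i
    have h4 := hc' j (c' j)
    have h5 : a (Sum.inl (j, i)) = true := by simp [a, c]
    rw [upd_self _, h5] at h3
    have hne : i ≠ c' j := by simpa using h3.symm
    rw [upd_ne _ (by simpa using hne.symm)] at h4
    have : c' j = i := by simpa [a, c] using h4
    exact hne this.symm
  · let a : (Fin d × Fin B) ⊕ Fin t → Bool :=
      Sum.elim (fun x => decide (x.2 = φ s x.1)) (fun _ => true)
    refine ⟨a, ?_⟩
    have h1 : addrF φ a = true := (addrF_of φ a (φ s) (fun _ _ => rfl)).2 (fun _ _ => rfl)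
    rw [h1]
    intro h2
    rw [addrF_of φ _ (φ s)] at h2
    · have := h2 s rfl
      rw [upd_self _] at this
      simp [a] at this
    · intro j i
      rw [upd_ne _ (by simp)]
      rfl

lemma evalBool_X {ι : Type} (a : ι → Bool) (i : ι) :
    evalBool a (MvPolynomial.X i) = if a i then 1 else 0 := by
  simp [evalBool]

lemma addrF_poly {d t : ℕ} (φ : Fin t → (Fin d → Fin (2 ^ d))) (hφ : Function.Injective φ) :
    HasProbPoly (addrF φ) (1 / 3) ((d + 1) + 6 * ((3 * d + 1) * 2)) := by
  -- data polynomials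
  have hY : ∀ c : Fin d → Fin (2 ^ d), ∃ Y : MvPolynomial ((Fin d × Fin (2 ^ d)) ⊕ Fin t) ℝ,
      Y.totalDegree ≤ 1 ∧ ∀ a, evalBool a Y =
        if (∀ s, φ s = c → a (Sum.inr s) = true) then 1 else 0 := by
    intro c
    by_cases h : ∃ s, φ s = c
    · obtain ⟨s, rfl⟩ := h
      refine ⟨MvPolynomial.X (Sum.inr s), by simp, fun a => ?_⟩
      rw [evalBool_X]
      congr 1
      apply propext
      constructor
      · intro h s' hs'
        rwa [hφ hs']
      · exact fun h => h s rfl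
    · push Not at h
      refine ⟨1, by simp, fun a => ?_⟩
      rw [if_pos]
      · simp [evalBool]
      · exact fun s hs => absurd hs (h s)
  choose Y hYd hYe using hY
  let z : ((Fin d × Fin (2 ^ d)) ⊕ Fin t → Bool) → (Fin d × Fin (2 ^ d) × Fin (2 ^ d)) → Prop :=
    fun a u => u.2.1 ≠ u.2.2 ∧ a (Sum.inl (u.1, u.2.1)) = true ∧ a (Sum.inl (u.1, u.2.2)) = true
  let M : (Fin d × Fin (2 ^ d) × Fin (2 ^ d)) → MvPolynomial ((Fin d × Fin (2 ^ d)) ⊕ Fin t) ℝ :=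
    fun u => if u.2.1 ≠ u.2.2 then
      MvPolynomial.X (Sum.inl (u.1, u.2.1)) * MvPolynomial.X (Sum.inl (u.1, u.2.2)) else 0
  have hcard : Fintype.card (Fin d × Fin (2 ^ d) × Fin (2 ^ d)) ≤ 2 ^ (3 * d) := by
    simp only [Fintype.card_prod, Fintype.card_fin]
    calc d * (2 ^ d * 2 ^ d) ≤ 2 ^ d * (2 ^ d * 2 ^ d) :=
          Nat.mul_le_mul_right _ Nat.lt_two_pow_self.le
      _ = 2 ^ (3 * d) := by ring
  obtain ⟨e, hT, he⟩ := or_test M 2 (3 * d) hcard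
    (by
      intro u
      simp only [M]
      split_ifs
      · refine (MvPolynomial.totalDegree_mul _ _).trans ?_
        simp
      · simp) z
    (by
      intro a u
      simp only [M, z]
      by_cases h : u.2.1 = u.2.2
      · simp [h, evalBool]
      · simp only [ne_eq, h, not_false_eq_true, if_true, evalBool_mul, evalBool_X, true_and]
        by_cases h1 : a (Sum.inl (u.1, u.2.1)) = true <;>
        by_cases h2 : a (Sum.inl (u.1, u.2.2)) = true <;> simp [h1, h2])
  refine hasProbPoly_of_test (addrF φ) _
    (∑ c : Fin d → Fin (2 ^ d), (∏ j, MvPolynomial.X (Sum.inl (j, c j))) * Y c)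
    _ _ e ?_ hT ?_ ?_
  · refine MvPolynomial.totalDegree_finsetSum_le fun c _ => ?_
    refine (MvPolynomial.totalDegree_mul _ _).trans (add_le_add ?_ (hYd c))
    refine (MvPolynomial.totalDegree_finsetProd _ _).trans ?_
    simp
  · intro a ha
    have hev : evalBool a (∑ c : Fin d → Fin (2 ^ d),
        (∏ j, MvPolynomial.X (Sum.inl (j, c j))) * Y c) =
        ∑ c : Fin d → Fin (2 ^ d), (∏ j, (if a (Sum.inl (j, c j)) then (1:ℝ) else 0)) *
          evalBool a (Y c) := by
      simp [evalBool]
    rw [hev]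
    by_cases hc : ∃ c : Fin d → Fin (2 ^ d), ∀ j, a (Sum.inl (j, c j)) = true
    · obtain ⟨c, hc⟩ := hc
      have huniq : ∀ j i, a (Sum.inl (j, i)) = decide (i = c j) := by
        intro j i
        by_cases hi : i = c j
        · simp [hi, hc]
        · have := ha (j, i, c j)
          simp only [z, not_and] at this
          have h2 : ¬ a (Sum.inl (j, i)) = true := fun h => this hi h (hc j)
          simp [hi, h2]
      rw [Finset.sum_eq_single c]
      · rw [hYe]
        have h1 : (∏ j, (if a (Sum.inl (j, c j)) then (1:ℝ) else 0)) = 1 :=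
          Finset.prod_eq_one fun j _ => by simp [hc j]
        rw [h1, one_mul]
        simp only [addrF_of φ a c huniq]
      · intro c' _ hne
        obtain ⟨j, hj⟩ := Function.ne_iff.1 hne
        apply mul_eq_zero_of_left
        refine Finset.prod_eq_zero (Finset.mem_univ j) ?_
        simp [huniq, hj]
      · simp
    · have hf : addrF φ a = false := by
        unfold addrF
        rw [decide_eq_false_iff_not]
        rintro ⟨c, h, -⟩
        exact hc ⟨c, fun j => by simp [h]⟩
      rw [hf]
      push Not at hc
      simp only [Bool.false_eq_true, if_false]
      refine Finset.sum_eq_zero fun c _ => ?_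
      obtain ⟨j, hj⟩ := hc c
      apply mul_eq_zero_of_left
      exact Finset.prod_eq_zero (Finset.mem_univ j) (by simp [hj])
  · intro a ha
    push Not at ha
    refine ⟨?_, he a ha⟩
    obtain ⟨⟨j, i, i'⟩, hne, h1, h2⟩ := ha
    unfold addrF
    rw [decide_eq_false_iff_not]
    rintro ⟨c, h, -⟩
    simp only [h, decide_eq_true_eq] at h1 h2
    exact hne (h1.trans h2.symm)

lemma HasProbPoly.transfer {ι κ : Type} (q : ι ≃ κ) {f : (ι → Bool) → Bool} {ε : ℝ} {D : ℕ}
    (h : HasProbPoly f ε D) : HasProbPoly (fun a : κ → Bool => f (a ∘ q)) ε D := by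
  obtain ⟨k, w, P, h0, h1, h2, h3⟩ := h
  refine ⟨k, w, fun i => MvPolynomial.rename q (P i), h0, h1, ?_, ?_⟩
  · exact fun i => (MvPolynomial.totalDegree_rename_le _ _).trans (h2 i)
  · intro a
    have := h3 (a ∘ q)
    have hev : ∀ i, evalBool a (MvPolynomial.rename q (P i)) = evalBool (a ∘ q) (P i) := by
      intro i
      unfold evalBool
      rw [MvPolynomial.eval_rename]
      rfl
    simp only [hev]
    exact this

lemma TrulyVariate.transfer {ι κ : Type} (q : ι ≃ κ) {f : (ι → Bool) → Bool}
    (h : TrulyVariate f) : TrulyVariate (fun a : κ → Bool => f (a ∘ q)) := by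
  intro i
  obtain ⟨a, ha⟩ := h (q.symm i)
  refine ⟨a ∘ q.symm, ?_⟩
  have h1 : (a ∘ q.symm) ∘ q = a := by funext x; simp
  have h2 : (Function.update (a ∘ q.symm) i (!((a ∘ q.symm) i))) ∘ q =
      Function.update a (q.symm i) (!(a (q.symm i))) := by
    funext x
    by_cases hx : x = q.symm i
    · subst hx; simp
    · have : q x ≠ i := fun h => hx (by rw [← h]; simp)
      simp [Function.update_of_ne, hx, this]
  simp only [h1, h2]
  exact ha

theorem sqrt_log_upper_bound :
    ∃ C : ℝ, 0 < C ∧ ∃ N : ℕ, ∀ n : ℕ, N ≤ n →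
      ∃ f : (Fin n → Bool) → Bool, TrulyVariate f ∧
        (pdeg (1/3) f : ℝ) ≤ C * Real.sqrt (Real.logb 2 n) := by
  refine ⟨100, by norm_num, 2 ^ 25, fun n hn => ?_⟩
  have hn0 : (0:ℝ) < n := by
    have : 0 < n := lt_of_lt_of_le (by norm_num) hn
    exact_mod_cast this
  set ℓ := Real.logb 2 n with hℓ
  have hℓ25 : 25 ≤ ℓ := by
    rw [hℓ, Real.le_logb_iff_rpow_le (by norm_num) hn0]
    have : ((2 ^ 25 : ℕ) : ℝ) ≤ n := by exact_mod_cast hn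
    norm_num at this ⊢
    exact this
  have h2ℓ : (2:ℝ) ^ ℓ = n := Real.rpow_logb (by norm_num) (by norm_num) hn0
  set d := ⌈Real.sqrt ℓ⌉₊ with hd
  have hs5 : 5 ≤ Real.sqrt ℓ := Real.le_sqrt_of_sq_le (by linarith)
  have hsq : Real.sqrt ℓ ^ 2 = ℓ := Real.sq_sqrt (by linarith)
  have hd1 : Real.sqrt ℓ ≤ d := Nat.le_ceil _
  have hd2 : (d:ℝ) < Real.sqrt ℓ + 1 := Nat.ceil_lt_add_one (by linarith)
  have hd5 : 5 ≤ d := by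
    have : (5:ℝ) ≤ d := hs5.trans hd1
    exact_mod_cast this
  have hup : n ≤ 2 ^ (d * d) := by
    have : (n:ℝ) ≤ 2 ^ (d * d) := by
      rw [← h2ℓ, ← Real.rpow_natCast]
      apply Real.rpow_le_rpow_of_exponent_le (by norm_num)
      push_cast
      nlinarith
    exact_mod_cast this
  have hlow : 2 ^ ((d - 1) * (d - 1)) ≤ n := by
    have : (2:ℝ) ^ ((d - 1) * (d - 1)) ≤ n := by
      rw [← h2ℓ, ← Real.rpow_natCast]
      apply Real.rpow_le_rpow_of_exponent_le (by norm_num)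
      rw [Nat.cast_mul, Nat.cast_sub (by omega)]
      push_cast
      have : (5:ℝ) ≤ d := by exact_mod_cast hd5
      nlinarith
    exact_mod_cast this
  have hle : d * 2 ^ d ≤ n := by
    refine le_trans ?_ hlow
    calc d * 2 ^ d ≤ 2 ^ d * 2 ^ d := Nat.mul_le_mul_right _ Nat.lt_two_pow_self.le
      _ = 2 ^ (d + d) := by rw [pow_add]
      _ ≤ 2 ^ ((d - 1) * (d - 1)) := by
        apply Nat.pow_le_pow_right (by norm_num)
        obtain ⟨k, hk⟩ : ∃ k, d = k + 5 := ⟨d - 5, by omega⟩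
        have : d - 1 = k + 4 := by omega
        rw [this, hk]
        nlinarith
  obtain ⟨t, ht⟩ := Nat.exists_eq_add_of_le hle
  have hφ : Nonempty (Fin t ↪ (Fin d → Fin (2 ^ d))) := by
    apply Function.Embedding.nonempty_of_card_le
    simp only [Fintype.card_fin, Fintype.card_fun]
    rw [← pow_mul]
    omega
  obtain ⟨φ⟩ := hφ
  have hcard : Fintype.card ((Fin d × Fin (2 ^ d)) ⊕ Fin t) = n := by
    simp [ht]
  let q := Fintype.equivFinOfCardEq hcard
  refine ⟨_, (addrF_truly φ φ.injective).transfer q, ?_⟩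
  have hpd := Nat.sInf_le (s := {D | HasProbPoly (fun a : Fin n → Bool => addrF φ (a ∘ q)) (1/3) D})
    ((addrF_poly φ φ.injective).transfer q)
  have hpd' : pdeg (1/3) (fun a : Fin n → Bool => addrF φ (a ∘ q)) ≤ 50 * d :=
    hpd.trans (by omega)
  have hpd'' : (pdeg (1/3) (fun a : Fin n → Bool => addrF φ (a ∘ q)) : ℝ) ≤ 50 * d := by
    exact_mod_cast hpd'
  linarith
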